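/- arXiv:1902.07137 — 3 statements merged into one kernel-verified Lean document; each statement's English description precedes it below -/
import Mathlib

section
/- A point x* = (x_1*,…,x_n*) ∈ (ℝ^d)^n is the minimizer of the sum-of-norms clustering objective if and only if there exist vectors w_ij ∈ ℝ^d for all i ≠ j in {1,…,n} satisfying: w_ij = −w_ji and ‖w_ij‖ ≤ 1 for all i ≠ j; w_ij = (x_i* − x_j*)/‖x_i* − x_j*‖ whenever x_i* ≠ x_j*; and x_i* − a_i + λ·Σ_{j ≠ i} w_ij = 0 for every i = 1,…,n. -/
open Finset

/-- The sum-of-norms clustering objective. -/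
noncomputable def sonObjective {d n : ℕ} (a : Fin n → EuclideanSpace ℝ (Fin d)) (lam : ℝ)
    (x : Fin n → EuclideanSpace ℝ (Fin d)) : ℝ :=
  (1 / 2) * ∑ i, ‖x i - a i‖ ^ 2 + lam * ∑ i, ∑ j, if i < j then ‖x i - x j‖ else 0

/-!
Along a ray from `x` the objective has a one-sided derivative, which is the pairing of the direction
with the gradient built from one particular admissible family of subgradients
`w i j ∈ ∂‖·‖ (x i - x j)`. At a minimizer these derivatives are all nonnegative. The gradients of
admissible families form a compact convex set, and the nonnegative derivative in the direction
opposite to its element of least norm forces that element to be `0`. Conversely, summing the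
subgradient inequalities for a family with zero gradient bounds the objective from below by its
value at `x`. Finite-dimensionality, which makes the set of families compact, is arranged by
restricting to the span of the points `x i` and `a i`.
-/

section NormSubdifferential

variable {E : Type*} [NormedAddCommGroup E] [InnerProductSpace ℝ E] {v w : E}

/-- The subdifferential of the norm of a real inner product space at `v`, with functionals
represented by vectors through the inner product. -/
def normSubdifferential (v : E) : Set E :=
  {w | ∀ u, ‖v‖ + inner ℝ w (u - v) ≤ ‖u‖}

theorem mem_normSubdifferential_iff :
    w ∈ normSubdifferential v ↔ ‖w‖ ≤ 1 ∧ inner ℝ w v = ‖v‖ := by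
  constructor
  · intro hw
    have norm_le_inner : ‖v‖ ≤ inner ℝ w v := by
      simpa using hw 0
    have inner_le_norm : inner ℝ w v ≤ ‖v‖ := by
      have h := hw (v + v)
      rw [add_sub_cancel_right] at h
      linarith [norm_add_le v v]
    have norm_mul_self_le : ‖w‖ * ‖w‖ ≤ ‖w‖ := by
      have h := hw (v + w)
      rw [add_sub_cancel_left, real_inner_self_eq_norm_mul_norm] at h
      linarith [norm_add_le v w]
    exact ⟨by nlinarith [norm_nonneg w], inner_le_norm.antisymm norm_le_inner⟩
  · rintro ⟨hw, hwv⟩ u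
    calc ‖v‖ + inner ℝ w (u - v) = inner ℝ w u := by rw [inner_sub_right, hwv]; ring
      _ ≤ ‖w‖ * ‖u‖ := real_inner_le_norm w u
      _ ≤ ‖u‖ := mul_le_of_le_one_left (norm_nonneg u) hw

theorem coe_mem_normSubdifferential_coe_iff {V : Submodule ℝ E} {v w : V} :
    (w : E) ∈ normSubdifferential (v : E) ↔ w ∈ normSubdifferential v := by
  simp only [mem_normSubdifferential_iff, Submodule.coe_norm, Submodule.coe_inner]

theorem mem_normSubdifferential_zero_iff : w ∈ normSubdifferential (0 : E) ↔ ‖w‖ ≤ 1 := by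
  simp [mem_normSubdifferential_iff]

theorem mem_normSubdifferential_iff_of_ne_zero (hv : v ≠ 0) :
    w ∈ normSubdifferential v ↔ w = ‖v‖⁻¹ • v := by
  have hv' : ‖v‖ ≠ 0 := norm_ne_zero_iff.mpr hv
  have norm_unit : ‖‖v‖⁻¹ • v‖ = 1 := by simpa using norm_smul_inv_norm (𝕜 := ℝ) hv
  rw [mem_normSubdifferential_iff]
  constructor
  · rintro ⟨hw, hwv⟩
    refine eq_of_norm_le_re_inner_eq_norm_sq (𝕜 := ℝ) (hw.trans_eq norm_unit.symm) ?_
    rw [norm_unit, real_inner_smul_right, hwv, inv_mul_cancel₀ hv', one_pow, RCLike.re_to_real]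
  · rintro rfl
    refine ⟨norm_unit.le, ?_⟩
    rw [real_inner_smul_self_left, inv_mul_cancel_left₀ hv']

theorem mem_normSubdifferential_iff_norm_le_one_and_eq :
    w ∈ normSubdifferential v ↔ ‖w‖ ≤ 1 ∧ (v ≠ 0 → w = ‖v‖⁻¹ • v) := by
  by_cases hv : v = 0
  · simp [hv, mem_normSubdifferential_zero_iff]
  · refine ⟨fun hw => ⟨(mem_normSubdifferential_iff.mp hw).1, fun _ => ?_⟩, fun hw => ?_⟩
    · exact (mem_normSubdifferential_iff_of_ne_zero hv).mp hw
    · exact (mem_normSubdifferential_iff_of_ne_zero hv).mpr (hw.2 hv)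

theorem isClosed_normSubdifferential (v : E) : IsClosed (normSubdifferential v) := by
  simp only [normSubdifferential, Set.ofPred_forall]
  exact isClosed_iInter fun u => isClosed_le (by fun_prop) continuous_const

theorem isCompact_normSubdifferential [FiniteDimensional ℝ E] (v : E) :
    IsCompact (normSubdifferential v) := by
  have : ProperSpace E := FiniteDimensional.proper ℝ E
  refine (isCompact_closedBall 0 1).of_isClosed_subset (isClosed_normSubdifferential v) ?_
  exact fun w hw => mem_closedBall_zero_iff.mpr (mem_normSubdifferential_iff.mp hw).1

theorem convex_normSubdifferential (v : E) : Convex ℝ (normSubdifferential v) := by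
  simp only [normSubdifferential, Set.ofPred_forall]
  refine convex_iInter fun u => ?_
  simp only [← le_sub_iff_add_le']
  exact convex_halfSpace_le ((innerₗ E).flip (u - v)).isLinear _

open Classical in
/-- The subgradient of the norm at `v` that computes its one-sided derivative in the direction `h`:
away from `0` it is the gradient, and at `0` it is the unit vector along `h`, or `0` if `h = 0`. -/
noncomputable def directionalSubgradient (v h : E) : E :=
  if v = 0 then ‖h‖⁻¹ • h else ‖v‖⁻¹ • v

theorem directionalSubgradient_neg_neg (v h : E) :
    directionalSubgradient (-v) (-h) = -directionalSubgradient v h := by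
  by_cases hv : v = 0 <;> simp [directionalSubgradient, hv]

theorem directionalSubgradient_mem_normSubdifferential (v h : E) :
    directionalSubgradient v h ∈ normSubdifferential v := by
  unfold directionalSubgradient
  split_ifs with hv
  · rw [hv, mem_normSubdifferential_zero_iff, ← mem_closedBall_zero_iff]
    exact inv_norm_smul_mem_unitClosedBall h
  · exact (mem_normSubdifferential_iff_of_ne_zero hv).mpr rfl

theorem hasDerivWithinAt_norm_add_smul (v h : E) :
    HasDerivWithinAt (fun t : ℝ => ‖v + t • h‖) (inner ℝ (directionalSubgradient v h) h)
      (Set.Ici 0) 0 := by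
  unfold directionalSubgradient
  split_ifs with hv
  · have norm_eq : ∀ t ∈ Set.Ici (0 : ℝ), ‖v + t • h‖ = t * ‖h‖ := fun t ht => by
      rw [hv, zero_add, norm_smul, Real.norm_of_nonneg ht]
    have inner_eq : inner ℝ (‖h‖⁻¹ • h) h = 1 * ‖h‖ := by
      rw [real_inner_smul_self_left, ← mul_assoc, inv_mul_mul_self, one_mul]
    rw [inner_eq]
    exact ((hasDerivWithinAt_id 0 _).mul_const ‖h‖).congr norm_eq (norm_eq 0 Set.self_mem_Ici)
  · have line : HasDerivAt (fun t : ℝ => v + t • h) h 0 := by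
      simpa using ((hasDerivAt_id (0 : ℝ)).smul_const h).const_add v
    have sqrt_norm_sq := line.norm_sq.sqrt (by simpa using hv)
    simp only [Real.sqrt_sq (norm_nonneg _), zero_smul, add_zero] at sqrt_norm_sq
    rw [mul_div_mul_left _ _ two_ne_zero, ← inv_mul_eq_div, ← real_inner_smul_left] at sqrt_norm_sq
    exact sqrt_norm_sq.hasDerivWithinAt

end NormSubdifferential

theorem nonneg_of_hasDerivWithinAt_Ici_of_isMinOn {f : ℝ → ℝ} {f' c : ℝ}
    (hf : HasDerivWithinAt f f' (Set.Ici c) c) (hmin : IsMinOn f (Set.Ici c) c) : 0 ≤ f' := by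
  have one_mem : (1 : ℝ) ∈ posTangentConeAt (Set.Ici c) c :=
    mem_posTangentConeAt_of_segment_subset <|
      (convex_Ici c).segment_subset Set.self_mem_Ici (by simp)
  simpa using hmin.localize.hasFDerivWithinAt_nonneg hf.hasFDerivWithinAt one_mem

/-- The element `v` of least norm satisfies `‖v‖ ^ 2 ≤ ⟪g, v⟫` for every `g` in the set. -/
theorem zero_mem_of_forall_exists_inner_nonpos {F : Type*} [NormedAddCommGroup F]
    [InnerProductSpace ℝ F] {K : Set F} (hne : K.Nonempty) (hcomplete : IsComplete K)
    (hconvex : Convex ℝ K) (hinner : ∀ v ∈ K, ∃ g ∈ K, inner ℝ g v ≤ 0) : 0 ∈ K := by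
  obtain ⟨v, hv, hv_min⟩ := exists_norm_eq_iInf_of_complete_convex hne hcomplete hconvex 0
  obtain ⟨g, hg, hgv⟩ := hinner v hv
  have h := (norm_eq_iInf_iff_real_inner_le_zero hconvex hv).mp hv_min g hg
  rw [zero_sub, inner_neg_left, inner_sub_right, real_inner_comm] at h
  have inner_self_le : inner ℝ v v ≤ 0 := by linarith
  rwa [(real_inner_self_nonpos (x := v)).mp inner_self_le] at hv

theorem sum_sum_ite_lt_eq_half_sum_sum {ι : Type*} [Fintype ι] [LinearOrder ι] {f : ι → ι → ℝ}
    (hsymm : ∀ i j, f i j = f j i) (hdiag : ∀ i, f i i = 0) :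
    ∑ i, ∑ j, (if i < j then f i j else 0) = (1 / 2) * ∑ i, ∑ j, f i j := by
  have sum_lt_eq_sum_gt :
      ∑ i, ∑ j, (if i < j then f i j else 0) = ∑ i, ∑ j, if j < i then f i j else 0 := by
    rw [sum_comm]
    simp only [hsymm]
  have lt_add_gt (i j : ι) :
      f i j = (if i < j then f i j else 0) + if j < i then f i j else 0 := by
    rcases lt_trichotomy i j with hij | rfl | hij
    · simp [hij, hij.not_gt]
    · simp [hdiag]
    · simp [hij, hij.not_gt]
  have sum_eq_add : ∑ i, ∑ j, f i j = ∑ i, ∑ j, (if i < j then f i j else 0) +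
      ∑ i, ∑ j, if j < i then f i j else 0 := by
    simp only [← sum_add_distrib, ← lt_add_gt]
  linarith

section PairSubgradients

variable {ι E : Type*} [NormedAddCommGroup E] [InnerProductSpace ℝ E]

/-- The admissible families of multipliers at `x`: antisymmetric choices of subgradients of the norm
at the differences `x i - x j`. Antisymmetry forces `w i i = 0`. -/
def pairSubgradients (x : ι → E) : Set (ι → ι → E) :=
  {w | (∀ i j, w i j = -w j i) ∧ ∀ i j, w i j ∈ normSubdifferential (x i - x j)}

theorem directionalSubgradient_mem_pairSubgradients (x h : ι → E) :
    (fun i j => directionalSubgradient (x i - x j) (h i - h j)) ∈ pairSubgradients x := by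
  refine ⟨fun i j => ?_, fun i j => directionalSubgradient_mem_normSubdifferential _ _⟩
  rw [← directionalSubgradient_neg_neg, neg_sub, neg_sub]

theorem isCompact_pairSubgradients [FiniteDimensional ℝ E] (x : ι → E) :
    IsCompact (pairSubgradients x) := by
  have isClosed_antisymm : IsClosed {w : ι → ι → E | ∀ i j, w i j = -w j i} := by
    simp only [Set.ofPred_forall]
    exact isClosed_iInter fun i => isClosed_iInter fun j =>
      isClosed_eq (by fun_prop) (by fun_prop)
  have isCompact_subgradients :
      IsCompact {w : ι → ι → E | ∀ i j, w i j ∈ normSubdifferential (x i - x j)} := by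
    simpa only [Set.pi, Set.mem_univ, true_imp_iff, Set.mem_ofPred_eq] using
      isCompact_univ_pi fun i => isCompact_univ_pi fun j =>
        isCompact_normSubdifferential (x i - x j)
  exact isCompact_subgradients.inter_left isClosed_antisymm

theorem convex_pairSubgradients (x : ι → E) : Convex ℝ (pairSubgradients x) := by
  intro w hw w' hw' p q hp hq hpq
  refine ⟨fun i j => ?_, fun i j =>
    convex_normSubdifferential (x i - x j) (hw.2 i j) (hw'.2 i j) hp hq hpq⟩
  simp only [Pi.add_apply, Pi.smul_apply]
  rw [hw.1 i j, hw'.1 i j, smul_neg, smul_neg, neg_add]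

end PairSubgradients

section Clustering

variable {ι E : Type*} [Fintype ι] [NormedAddCommGroup E] [InnerProductSpace ℝ E]
  {a x : ι → E} {lam : ℝ} {w : ι → ι → E}

/-- The sum-of-norms clustering objective for points of a real inner product space indexed by an
arbitrary finite type. The sum over unordered pairs is written as half the sum over ordered pairs,
so that no order on the index type is needed. -/
noncomputable def clusteringObjective (a : ι → E) (lam : ℝ) (x : ι → E) : ℝ :=
  (1 / 2) * ∑ i, ‖x i - a i‖ ^ 2 + lam * ((1 / 2) * ∑ i, ∑ j, ‖x i - x j‖)

/-- The subgradient of the clustering objective at `x` determined by a family of multipliers, as an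
element of the `ℓ²`-product of the ambient space. -/
noncomputable def clusteringGradient (a : ι → E) (lam : ℝ) (x : ι → E) (w : ι → ι → E) :
    PiLp 2 (fun _ : ι => E) :=
  WithLp.toLp 2 fun i => x i - a i + lam • ∑ j, w i j

theorem sum_sum_inner_sub_of_antisymm (hanti : ∀ i j, w i j = -w j i) (h : ι → E) :
    ∑ i, ∑ j, inner ℝ (w i j) (h i - h j) = 2 * ∑ i, inner ℝ (∑ j, w i j) (h i) := by
  have swap : ∑ i, ∑ j, inner ℝ (w i j) (h j) = -∑ i, ∑ j, inner ℝ (w i j) (h i) := by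
    rw [sum_comm]
    simp only [← sum_neg_distrib, ← inner_neg_left, ← hanti]
  simp only [inner_sub_right, sum_sub_distrib, swap, sum_inner]
  ring

theorem inner_clusteringGradient (hanti : ∀ i j, w i j = -w j i) (h : PiLp 2 (fun _ : ι => E)) :
    inner ℝ (clusteringGradient a lam x w) h =
      ∑ i, inner ℝ (x i - a i) (h i) +
        lam * ((1 / 2) * ∑ i, ∑ j, inner ℝ (w i j) (h i - h j)) := by
  rw [sum_sum_inner_sub_of_antisymm hanti, one_div, inv_mul_cancel_left₀ two_ne_zero]
  simp only [clusteringGradient, PiLp.inner_apply, inner_add_left, real_inner_smul_left,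
    sum_add_distrib, mul_sum]

theorem clusteringObjective_add_inner_clusteringGradient_le (hlam : 0 ≤ lam)
    (hw : w ∈ pairSubgradients x) (y : ι → E) :
    clusteringObjective a lam x +
        inner ℝ (clusteringGradient a lam x w) (WithLp.toLp 2 fun i => y i - x i) ≤
      clusteringObjective a lam y := by
  have quadratic_le (i : ι) :
      (1 / 2) * ‖x i - a i‖ ^ 2 + inner ℝ (x i - a i) (y i - x i) ≤ (1 / 2) * ‖y i - a i‖ ^ 2 := by
    have expand := norm_add_sq_real (x i - a i) (y i - x i)
    rw [sub_add_sub_cancel'] at expand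
    linarith [sq_nonneg ‖y i - x i‖]
  have norm_le (i j : ι) :
      ‖x i - x j‖ + inner ℝ (w i j) ((y i - x i) - (y j - x j)) ≤ ‖y i - y j‖ := by
    rw [sub_sub_sub_comm]
    exact hw.2 i j (y i - y j)
  have sum_quadratic_le := sum_le_sum fun i (_ : i ∈ univ) => quadratic_le i
  have sum_norm_le := sum_le_sum fun i (_ : i ∈ univ) =>
    sum_le_sum fun j (_ : j ∈ univ) => norm_le i j
  simp only [sum_add_distrib, ← mul_sum] at sum_quadratic_le sum_norm_le
  rw [inner_clusteringGradient hw.1]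
  unfold clusteringObjective
  linarith [mul_le_mul_of_nonneg_left sum_norm_le hlam]

theorem hasDerivWithinAt_clusteringObjective_add_smul (a : ι → E) (lam : ℝ) (x : ι → E)
    (h : PiLp 2 (fun _ : ι => E)) :
    HasDerivWithinAt (fun t : ℝ => clusteringObjective a lam fun i => x i + t • h i)
      (inner ℝ (clusteringGradient a lam x fun i j =>
        directionalSubgradient (x i - x j) (h i - h j)) h) (Set.Ici 0) 0 := by
  have quadratic (i : ι) : HasDerivWithinAt (fun t : ℝ => ‖x i + t • h i - a i‖ ^ 2)
      (2 * inner ℝ (x i - a i) (h i)) (Set.Ici 0) 0 := by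
    have line : HasDerivAt (fun t : ℝ => x i + t • h i - a i) (h i) 0 := by
      simpa using (((hasDerivAt_id (0 : ℝ)).smul_const (h i)).const_add (x i)).sub_const (a i)
    simpa using line.norm_sq.hasDerivWithinAt
  have pair (i j : ι) : HasDerivWithinAt (fun t : ℝ => ‖(x i + t • h i) - (x j + t • h j)‖)
      (inner ℝ (directionalSubgradient (x i - x j) (h i - h j)) (h i - h j)) (Set.Ici 0) 0 := by
    simpa only [add_sub_add_comm, smul_sub] using
      hasDerivWithinAt_norm_add_smul (x i - x j) (h i - h j)
  have objective :=
    ((HasDerivWithinAt.fun_sum fun i (_ : i ∈ univ) => quadratic i).const_mul (1 / 2)).add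
      (((HasDerivWithinAt.fun_sum fun i (_ : i ∈ univ) =>
        HasDerivWithinAt.fun_sum fun j (_ : j ∈ univ) => pair i j).const_mul (1 / 2)).const_mul lam)
  rw [← mul_sum, one_div, inv_mul_cancel_left₀ two_ne_zero, ← one_div] at objective
  rw [inner_clusteringGradient (directionalSubgradient_mem_pairSubgradients x h).1]
  exact objective

theorem exists_pairSubgradients_inner_clusteringGradient_nonneg
    (hmin : ∀ y, clusteringObjective a lam x ≤ clusteringObjective a lam y)
    (h : PiLp 2 (fun _ : ι => E)) :
    ∃ w ∈ pairSubgradients x, 0 ≤ inner ℝ (clusteringGradient a lam x w) h := by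
  refine ⟨_, directionalSubgradient_mem_pairSubgradients x h,
    nonneg_of_hasDerivWithinAt_Ici_of_isMinOn
      (hasDerivWithinAt_clusteringObjective_add_smul a lam x h) fun t _ => ?_⟩
  simpa using hmin fun i => x i + t • h i

theorem continuous_clusteringGradient (a : ι → E) (lam : ℝ) (x : ι → E) :
    Continuous (clusteringGradient a lam x) := by
  unfold clusteringGradient
  fun_prop

theorem clusteringGradient_convexCombination (a : ι → E) (lam : ℝ) (x : ι → E) (w w' : ι → ι → E)
    {p q : ℝ} (hpq : p + q = 1) :
    clusteringGradient a lam x (p • w + q • w') =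
      p • clusteringGradient a lam x w + q • clusteringGradient a lam x w' := by
  obtain rfl : q = 1 - p := by linarith
  ext i
  simp only [clusteringGradient, PiLp.add_apply, PiLp.smul_apply, Pi.add_apply, Pi.smul_apply,
    sum_add_distrib, ← smul_sum]
  module

theorem convex_image_clusteringGradient (a : ι → E) (lam : ℝ) (x : ι → E) :
    Convex ℝ (clusteringGradient a lam x '' pairSubgradients x) := by
  rintro _ ⟨w, hw, rfl⟩ _ ⟨w', hw', rfl⟩ p q hp hq hpq
  exact ⟨p • w + q • w', convex_pairSubgradients x hw hw' hp hq hpq,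
    clusteringGradient_convexCombination a lam x w w' hpq⟩

theorem exists_clusteringGradient_eq_zero_of_finiteDimensional [FiniteDimensional ℝ E]
    (hmin : ∀ y, clusteringObjective a lam x ≤ clusteringObjective a lam y) :
    ∃ w ∈ pairSubgradients x, clusteringGradient a lam x w = 0 := by
  refine zero_mem_of_forall_exists_inner_nonpos
    ⟨_, Set.mem_image_of_mem _ (directionalSubgradient_mem_pairSubgradients x 0)⟩
    ((isCompact_pairSubgradients x).image (continuous_clusteringGradient a lam x)).isComplete
    (convex_image_clusteringGradient a lam x) fun v _ => ?_
  obtain ⟨w, hw, hwv⟩ := exists_pairSubgradients_inner_clusteringGradient_nonneg hmin (-v)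
  refine ⟨_, Set.mem_image_of_mem _ hw, ?_⟩
  rwa [inner_neg_right, neg_nonneg] at hwv

theorem exists_clusteringGradient_eq_zero
    (hmin : ∀ y, clusteringObjective a lam x ≤ clusteringObjective a lam y) :
    ∃ w ∈ pairSubgradients x, clusteringGradient a lam x w = 0 := by
  let V : Submodule ℝ E := Submodule.span ℝ (Set.range x ∪ Set.range a)
  have : FiniteDimensional ℝ V :=
    FiniteDimensional.span_of_finite ℝ ((Set.finite_range x).union (Set.finite_range a))
  let xV (i : ι) : V := ⟨x i, Submodule.subset_span (Or.inl ⟨i, rfl⟩)⟩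
  let aV (i : ι) : V := ⟨a i, Submodule.subset_span (Or.inr ⟨i, rfl⟩)⟩
  obtain ⟨w, ⟨hanti, hsub⟩, hgrad⟩ :=
    exists_clusteringGradient_eq_zero_of_finiteDimensional (a := aV) (x := xV) (lam := lam)
      fun y => hmin fun i => y i
  refine ⟨fun i j => w i j, ⟨fun i j => ?_, fun i j => ?_⟩, ?_⟩
  · exact congrArg Subtype.val (hanti i j)
  · exact coe_mem_normSubdifferential_coe_iff.mpr (hsub i j)
  · ext i
    simpa [clusteringGradient, xV, aV] using congrArg (fun g => (g i : E)) hgrad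

theorem clusteringObjective_isMinimizer_iff (hlam : 0 ≤ lam) :
    (∀ y, clusteringObjective a lam x ≤ clusteringObjective a lam y) ↔
      ∃ w ∈ pairSubgradients x, clusteringGradient a lam x w = 0 := by
  refine ⟨exists_clusteringGradient_eq_zero, ?_⟩
  rintro ⟨w, hw, hgrad⟩ y
  simpa [hgrad] using clusteringObjective_add_inner_clusteringGradient_le (a := a) hlam hw y

theorem exists_clusteringGradient_eq_zero_iff_offDiag [DecidableEq ι] :
    (∃ w ∈ pairSubgradients x, clusteringGradient a lam x w = 0) ↔
      ∃ w : ι → ι → E,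
        (∀ i j, i ≠ j → w i j = -w j i) ∧
        (∀ i j, i ≠ j → ‖w i j‖ ≤ 1) ∧
        (∀ i j, i ≠ j → x i ≠ x j → w i j = ‖x i - x j‖⁻¹ • (x i - x j)) ∧
        (∀ i, x i - a i + lam • ∑ j ∈ univ.erase i, w i j = 0) := by
  constructor
  · rintro ⟨w, ⟨hanti, hsub⟩, hgrad⟩
    simp only [mem_normSubdifferential_iff_norm_le_one_and_eq, sub_ne_zero] at hsub
    refine ⟨w, fun i j _ => hanti i j, fun i j _ => (hsub i j).1, fun i j _ => (hsub i j).2,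
      fun i => ?_⟩
    have : IsAddTorsionFree E := .of_isTorsionFree ℝ E
    rw [sum_erase univ (self_eq_neg.mp (hanti i i))]
    exact congrArg (fun g => g i) hgrad
  · rintro ⟨w, hanti, hnorm, hunit, hgrad⟩
    refine ⟨fun i j => if i = j then 0 else w i j, ⟨fun i j => ?_, fun i j => ?_⟩, ?_⟩
    · by_cases hij : i = j
      · simp [hij]
      · simpa only [if_neg hij, if_neg (Ne.symm hij)] using hanti i j hij
    · rw [mem_normSubdifferential_iff_norm_le_one_and_eq, sub_ne_zero]
      by_cases hij : i = j
      · simp [hij]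
      · simpa only [if_neg hij] using ⟨hnorm i j hij, hunit i j hij⟩
    · ext i
      have sum_eq : ∑ j, (if i = j then 0 else w i j) = ∑ j ∈ univ.erase i, w i j := by
        simp only [← ite_not (i = _), ← sum_filter, ← filter_ne]
      simpa only [clusteringGradient, sum_eq, PiLp.zero_apply] using hgrad i

theorem sonObjective_isMinimizer_iff_subgradient_general [DecidableEq ι] (a : ι → E)
    (hlam : 0 ≤ lam) (x : ι → E) :
    (∀ y, clusteringObjective a lam x ≤ clusteringObjective a lam y) ↔
      ∃ w : ι → ι → E,
        (∀ i j, i ≠ j → w i j = -w j i) ∧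
        (∀ i j, i ≠ j → ‖w i j‖ ≤ 1) ∧
        (∀ i j, i ≠ j → x i ≠ x j → w i j = ‖x i - x j‖⁻¹ • (x i - x j)) ∧
        (∀ i, x i - a i + lam • ∑ j ∈ univ.erase i, w i j = 0) :=
  (clusteringObjective_isMinimizer_iff hlam).trans exists_clusteringGradient_eq_zero_iff_offDiag

end Clustering

theorem sonObjective_eq_clusteringObjective {d n : ℕ} (a : Fin n → EuclideanSpace ℝ (Fin d))
    (lam : ℝ) (x : Fin n → EuclideanSpace ℝ (Fin d)) :
    sonObjective a lam x = clusteringObjective a lam x := by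
  unfold sonObjective clusteringObjective
  rw [sum_sum_ite_lt_eq_half_sum_sum (fun i j => norm_sub_rev (x i) (x j)) (by simp)]

/-- First-order optimality: `x` is the minimizer of the sum-of-norms objective iff there
exist subgradients `w i j` (`i ≠ j`) with `w i j = -w j i`, `‖w i j‖ ≤ 1`,
`w i j = (x i - x j)/‖x i - x j‖` whenever `x i ≠ x j`, and
`x i - a i + λ·Σ_{j ≠ i} w i j = 0` for every `i`. -/
theorem sonObjective_isMinimizer_iff_subgradient
    (d n : ℕ) (a : Fin n → EuclideanSpace ℝ (Fin d)) (lam : ℝ) (hlam : 0 ≤ lam)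
    (x : Fin n → EuclideanSpace ℝ (Fin d)) :
    (∀ y : Fin n → EuclideanSpace ℝ (Fin d), sonObjective a lam x ≤ sonObjective a lam y) ↔
    ∃ w : Fin n → Fin n → EuclideanSpace ℝ (Fin d),
      (∀ i j, i ≠ j → w i j = -w j i) ∧
      (∀ i j, i ≠ j → ‖w i j‖ ≤ 1) ∧
      (∀ i j, i ≠ j → x i ≠ x j → w i j = ‖x i - x j‖⁻¹ • (x i - x j)) ∧
      (∀ i, x i - a i + lam • ∑ j ∈ univ.erase i, w i j = 0) := by
  simpa only [sonObjective_eq_clusteringObjective] using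
    sonObjective_isMinimizer_iff_subgradient_general a hlam x
end

section
/- (Cluster characterization, sufficient condition.) Let C be a nonempty subset of {1,…,n} and λ > 0. Suppose there exist vectors z_ij* ∈ ℝ^d for i, j ∈ C with i ≠ j such that: a_i − (1/|C|)·Σ_{l∈C} a_l = λ·Σ_{j∈C∖{i}} z_ij* for all i ∈ C; ‖z_ij*‖ ≤ 1 for all i ≠ j in C; and z_ij* = −z_ji* for all i ≠ j in C. Then there exists x̂ ∈ ℝ^d such that the minimizer x* = (x_1*,…,x_n*) of the sum-of-norms clustering objective satisfies x_i* = x̂ for all i ∈ C (i.e., all points of C lie in the same cluster). -/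
open Finset

/-!
Collapsing the points `x i`, `i ∈ C`, to their mean `m` lowers the objective by at least
`(1 / 2) * ∑ i ∈ C, ‖x i - m‖ ^ 2`, so a minimizer is already constant on `C`. Indeed,

* distances within `C` vanish, while by convexity of the norm the total distance from `C` to any
  outside point does not grow;
* the squared residuals decrease by `∑ i ∈ C, ‖x i - m‖ ^ 2`, up to the cross term
  `2 * ∑ i ∈ C, ⟪x i - m, a i - b⟫` with `b` the mean of the `a i`. Expanding `a i - b` in the
  multipliers, antisymmetry turns this cross term into `lam * ∑ i ∈ C, ∑ j ∈ C, ⟪x i - x j, z i j⟫`,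
  which the vanishing distances within `C` pay for because `‖z i j‖ ≤ 1`.
-/

section SymmetricSums

variable {ι M : Type*} [Fintype ι] [AddCommMonoid M] {g : ι → ι → M}

lemma two_nsmul_sum_sum_ite_lt [LinearOrder ι] (hsymm : ∀ i j, g i j = g j i)
    (hdiag : ∀ i, g i i = 0) :
    2 • ∑ i, ∑ j, (if i < j then g i j else 0) = ∑ i, ∑ j, g i j := by
  have hreverse : ∑ i, ∑ j, (if i < j then g i j else 0) =
      ∑ i, ∑ j, (if j < i then g i j else 0) := by
    rw [sum_comm]
    exact sum_congr rfl fun i _ ↦ sum_congr rfl fun j _ ↦ by rw [hsymm]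
  have hsplit (i j : ι) :
      g i j = (if i < j then g i j else 0) + (if j < i then g i j else 0) := by
    rcases lt_trichotomy i j with hlt | rfl | hgt
    · simp [hlt, hlt.not_gt]
    · simp [hdiag]
    · simp [hgt, hgt.not_gt]
  calc 2 • ∑ i, ∑ j, (if i < j then g i j else 0)
      = ∑ i, ∑ j, (if i < j then g i j else 0) + ∑ i, ∑ j, (if j < i then g i j else 0) := by
        rw [two_nsmul, ← hreverse]
    _ = ∑ i, ∑ j, g i j := by
        simp only [← sum_add_distrib, ← hsplit]

lemma sum_sum_eq_add_compl [DecidableEq ι] (hsymm : ∀ i j, g i j = g j i) (C : Finset ι) :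
    ∑ i, ∑ j, g i j =
      ∑ i ∈ C, ∑ j ∈ C, g i j + 2 • ∑ j ∈ Cᶜ, ∑ i ∈ C, g i j + ∑ i ∈ Cᶜ, ∑ j ∈ Cᶜ, g i j := by
  have hupper : ∑ i ∈ C, ∑ j ∈ Cᶜ, g i j = ∑ j ∈ Cᶜ, ∑ i ∈ C, g i j := sum_comm
  have hlower : ∑ i ∈ Cᶜ, ∑ j ∈ C, g i j = ∑ j ∈ Cᶜ, ∑ i ∈ C, g i j :=
    sum_congr rfl fun i _ ↦ sum_congr rfl fun j _ ↦ hsymm i j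
  simp only [← sum_add_sum_compl C, sum_add_distrib, hupper, hlower, two_nsmul, add_assoc]

end SymmetricSums

lemma sum_sub_mean_eq_zero {ι k E : Type*} [DivisionRing k] [CharZero k] [AddCommGroup E]
    [Module k E] (C : Finset ι) (x : ι → E) :
    ∑ i ∈ C, (x i - (#C : k)⁻¹ • ∑ l ∈ C, x l) = 0 := by
  rcases C.eq_empty_or_nonempty with rfl | hC
  · simp
  · have hcard : (#C : k) ≠ 0 := Nat.cast_ne_zero.mpr hC.card_ne_zero
    rw [sum_sub_distrib, sum_const, ← Nat.cast_smul_eq_nsmul k, smul_inv_smul₀ hcard, sub_self]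

section Norm

variable {ι E : Type*} [SeminormedAddCommGroup E] [NormedSpace ℝ E]
  {C : Finset ι} {x : ι → E} {m : E}

lemma card_mul_norm_sub_le_sum_norm_sub (hm : ∑ i ∈ C, (x i - m) = 0) (v : E) :
    #C * ‖m - v‖ ≤ ∑ i ∈ C, ‖x i - v‖ := by
  have hsum : ∑ i ∈ C, (x i - v) = (#C : ℝ) • (m - v) := by
    calc ∑ i ∈ C, (x i - v) = ∑ i ∈ C, (x i - m) + ∑ _i ∈ C, (m - v) := by
          rw [← sum_add_distrib]; simp only [sub_add_sub_cancel]
      _ = (#C : ℝ) • (m - v) := by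
          rw [hm, zero_add, sum_const, Nat.cast_smul_eq_nsmul]
  calc #C * ‖m - v‖ = ‖∑ i ∈ C, (x i - v)‖ := by
        rw [hsum, norm_smul, RCLike.norm_natCast]
    _ ≤ ∑ i ∈ C, ‖x i - v‖ := norm_sum_le _ _

lemma sum_sum_norm_sub_piecewise_add_le [Fintype ι] [DecidableEq ι]
    (hm : ∑ i ∈ C, (x i - m) = 0) :
    ∑ i, ∑ j, ‖C.piecewise (fun _ ↦ m) x i - C.piecewise (fun _ ↦ m) x j‖
      + ∑ i ∈ C, ∑ j ∈ C, ‖x i - x j‖ ≤ ∑ i, ∑ j, ‖x i - x j‖ := by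
  set y := C.piecewise (fun _ ↦ m) x
  have hyC : ∀ i ∈ C, y i = m := fun i hi ↦ piecewise_eq_of_mem _ _ _ hi
  have hyCc : ∀ i ∈ Cᶜ, y i = x i := fun i hi ↦
    piecewise_eq_of_notMem _ _ _ (mem_compl.mp hi)
  have hinner : ∑ i ∈ C, ∑ j ∈ C, ‖y i - y j‖ = 0 :=
    sum_eq_zero fun i hi ↦ sum_eq_zero fun j hj ↦ by
      rw [hyC i hi, hyC j hj, sub_self, norm_zero]
  have hcross : ∑ j ∈ Cᶜ, ∑ i ∈ C, ‖y i - y j‖ ≤ ∑ j ∈ Cᶜ, ∑ i ∈ C, ‖x i - x j‖ :=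
    sum_le_sum fun j hj ↦ calc
      ∑ i ∈ C, ‖y i - y j‖ = ∑ _i ∈ C, ‖m - x j‖ :=
        sum_congr rfl fun i hi ↦ by rw [hyC i hi, hyCc j hj]
      _ = #C * ‖m - x j‖ := by rw [sum_const, nsmul_eq_mul]
      _ ≤ ∑ i ∈ C, ‖x i - x j‖ := card_mul_norm_sub_le_sum_norm_sub hm (x j)
  have houter : ∑ i ∈ Cᶜ, ∑ j ∈ Cᶜ, ‖y i - y j‖ = ∑ i ∈ Cᶜ, ∑ j ∈ Cᶜ, ‖x i - x j‖ :=
    sum_congr rfl fun i hi ↦ sum_congr rfl fun j hj ↦ by rw [hyCc i hi, hyCc j hj]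
  rw [sum_sum_eq_add_compl (fun i j ↦ norm_sub_rev (y i) (y j)) C,
    sum_sum_eq_add_compl (fun i j ↦ norm_sub_rev (x i) (x j)) C, hinner, houter]
  simp only [two_nsmul]
  linarith

end Norm

section InnerProduct

variable {ι E : Type*} [SeminormedAddCommGroup E] [InnerProductSpace ℝ E]
  {C : Finset ι} {x : ι → E} {m : E}

lemma sum_norm_sub_sq_add_sum_norm_sub_sq (hm : ∑ i ∈ C, (x i - m) = 0) (a : ι → E) (b : E) :
    ∑ i ∈ C, ‖m - a i‖ ^ 2 + ∑ i ∈ C, ‖x i - m‖ ^ 2 =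
      ∑ i ∈ C, ‖x i - a i‖ ^ 2 + 2 * ∑ i ∈ C, inner ℝ (x i - m) (a i - b) := by
  have hortho : ∑ i ∈ C, inner ℝ (x i - m) (m - b) = 0 := by
    rw [← sum_inner, hm, inner_zero_left]
  have hexpand (i : ι) : ‖m - a i‖ ^ 2 + ‖x i - m‖ ^ 2 =
      ‖x i - a i‖ ^ 2 + 2 * inner ℝ (x i - m) (a i - b) - 2 * inner ℝ (x i - m) (m - b) := by
    rw [← sub_add_sub_cancel (x i) m (a i), norm_add_sq_real,
      ← sub_sub_sub_cancel_right m (a i) b, inner_sub_right]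
    ring
  rw [← sum_add_distrib, sum_congr rfl fun i _ ↦ hexpand i, sum_sub_distrib, sum_add_distrib,
    ← mul_sum, ← mul_sum, hortho, mul_zero, sub_zero]

variable [DecidableEq ι]

lemma sum_norm_piecewise_sub_sq_add_sum_norm_sub_sq [Fintype ι] (hm : ∑ i ∈ C, (x i - m) = 0)
    (a : ι → E) (b : E) :
    ∑ i, ‖C.piecewise (fun _ ↦ m) x i - a i‖ ^ 2 + ∑ i ∈ C, ‖x i - m‖ ^ 2 =
      ∑ i, ‖x i - a i‖ ^ 2 + 2 * ∑ i ∈ C, inner ℝ (x i - m) (a i - b) := by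
  have hC : ∑ i ∈ C, ‖C.piecewise (fun _ ↦ m) x i - a i‖ ^ 2 = ∑ i ∈ C, ‖m - a i‖ ^ 2 :=
    sum_congr rfl fun i hi ↦ by rw [piecewise_eq_of_mem _ _ _ hi]
  have hCc : ∑ i ∈ Cᶜ, ‖C.piecewise (fun _ ↦ m) x i - a i‖ ^ 2 = ∑ i ∈ Cᶜ, ‖x i - a i‖ ^ 2 :=
    sum_congr rfl fun i hi ↦ by rw [piecewise_eq_of_notMem _ _ _ (mem_compl.mp hi)]
  rw [← sum_add_sum_compl C, ← sum_add_sum_compl C fun i ↦ ‖x i - a i‖ ^ 2, hC, hCc]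
  linarith [sum_norm_sub_sq_add_sum_norm_sub_sq hm a b]

variable {z : ι → ι → E}

lemma two_mul_sum_inner_sum_erase_of_antisymm
    (hanti : ∀ i ∈ C, ∀ j ∈ C, i ≠ j → z i j = -z j i) (u : ι → E) :
    2 * ∑ i ∈ C, inner ℝ (u i) (∑ j ∈ C.erase i, z i j) =
      ∑ i ∈ C, ∑ j ∈ C.erase i, inner ℝ (u i - u j) (z i j) := by
  have hswap : ∑ i ∈ C, ∑ j ∈ C.erase i, inner ℝ (u i) (z i j) =
      ∑ i ∈ C, ∑ j ∈ C.erase i, -inner ℝ (u j) (z i j) := by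
    rw [sum_comm' (t' := C) (s' := fun j ↦ C.erase j) (by grind)]
    refine sum_congr rfl fun i hi ↦ sum_congr rfl fun j hj ↦ ?_
    obtain ⟨hne, hj⟩ := mem_erase.mp hj
    rw [hanti j hj i hi hne, inner_neg_right]
  simp only [inner_sum, sub_eq_add_neg, inner_add_left, inner_neg_left, sum_add_distrib, ← hswap,
    two_mul]

lemma two_mul_sum_inner_sum_erase_le_of_antisymm
    (hnorm : ∀ i ∈ C, ∀ j ∈ C, i ≠ j → ‖z i j‖ ≤ 1)
    (hanti : ∀ i ∈ C, ∀ j ∈ C, i ≠ j → z i j = -z j i) (u : ι → E) :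
    2 * ∑ i ∈ C, inner ℝ (u i) (∑ j ∈ C.erase i, z i j) ≤ ∑ i ∈ C, ∑ j ∈ C, ‖u i - u j‖ := by
  rw [two_mul_sum_inner_sum_erase_of_antisymm hanti]
  refine sum_le_sum fun i hi ↦ ?_
  calc ∑ j ∈ C.erase i, inner ℝ (u i - u j) (z i j)
      ≤ ∑ j ∈ C.erase i, ‖u i - u j‖ := sum_le_sum fun j hj ↦ by
        obtain ⟨hne, hj⟩ := mem_erase.mp hj
        exact (real_inner_le_norm _ _).trans
          (mul_le_of_le_one_right (norm_nonneg _) (hnorm i hi j hj hne.symm))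
    _ = ∑ j ∈ C, ‖u i - u j‖ := sum_erase _ (by rw [sub_self, norm_zero])

end InnerProduct

/-- The sum-of-norms clustering objective for a finite family of points in an arbitrary
(semi)normed group. The sum over unordered pairs is encoded as half the sum over ordered pairs, so
that the index type needs no order. -/
noncomputable def sumOfNormsObjective {ι E : Type*} [Fintype ι] [SeminormedAddCommGroup E]
    (a : ι → E) (lam : ℝ) (x : ι → E) : ℝ :=
  (1 / 2) * ∑ i, ‖x i - a i‖ ^ 2 + lam * ((1 / 2) * ∑ i, ∑ j, ‖x i - x j‖)

lemma sonObjective_eq_sumOfNormsObjective {d n : ℕ} (a : Fin n → EuclideanSpace ℝ (Fin d))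
    (lam : ℝ) (x : Fin n → EuclideanSpace ℝ (Fin d)) :
    sonObjective a lam x = sumOfNormsObjective a lam x := by
  have hpairs := two_nsmul_sum_sum_ite_lt (fun i j ↦ norm_sub_rev (x i) (x j))
    fun i ↦ by rw [sub_self, norm_zero]
  rw [sonObjective, sumOfNormsObjective, ← hpairs, nsmul_eq_mul, Nat.cast_ofNat,
    ← mul_assoc (1 / 2), one_div_mul_cancel two_ne_zero, one_mul]

lemma sumOfNormsObjective_piecewise_add_le {ι E : Type*} [Fintype ι] [DecidableEq ι]
    [SeminormedAddCommGroup E] [InnerProductSpace ℝ E] {a : ι → E} {lam : ℝ} (hlam : 0 ≤ lam)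
    {C : Finset ι} {z : ι → ι → E} {b : E}
    (hz : ∀ i ∈ C, a i - b = lam • ∑ j ∈ C.erase i, z i j)
    (hnorm : ∀ i ∈ C, ∀ j ∈ C, i ≠ j → ‖z i j‖ ≤ 1)
    (hanti : ∀ i ∈ C, ∀ j ∈ C, i ≠ j → z i j = -z j i)
    {x : ι → E} {m : E} (hm : ∑ i ∈ C, (x i - m) = 0) :
    sumOfNormsObjective a lam (C.piecewise (fun _ ↦ m) x) + (1 / 2) * ∑ i ∈ C, ‖x i - m‖ ^ 2 ≤
      sumOfNormsObjective a lam x := by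
  have hresidual := sum_norm_piecewise_sub_sq_add_sum_norm_sub_sq hm a b
  have hpairs := mul_le_mul_of_nonneg_left (sum_sum_norm_sub_piecewise_add_le hm) hlam
  have hcross : 2 * ∑ i ∈ C, inner ℝ (x i - m) (a i - b) ≤
      lam * ∑ i ∈ C, ∑ j ∈ C, ‖x i - x j‖ := calc
    2 * ∑ i ∈ C, inner ℝ (x i - m) (a i - b)
      = lam * (2 * ∑ i ∈ C, inner ℝ (x i - m) (∑ j ∈ C.erase i, z i j)) := by
        rw [mul_left_comm, mul_sum C _ lam]
        exact congrArg (2 * ·) (sum_congr rfl fun i hi ↦ by rw [hz i hi, real_inner_smul_right])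
    _ ≤ lam * ∑ i ∈ C, ∑ j ∈ C, ‖(x i - m) - (x j - m)‖ :=
        mul_le_mul_of_nonneg_left
          (two_mul_sum_inner_sum_erase_le_of_antisymm hnorm hanti fun i ↦ x i - m) hlam
    _ = lam * ∑ i ∈ C, ∑ j ∈ C, ‖x i - x j‖ := by simp only [sub_sub_sub_cancel_right]
  rw [mul_add] at hpairs
  rw [sumOfNormsObjective, sumOfNormsObjective]
  linarith

theorem cluster_characterization_sufficient_general {ι E : Type*} [Fintype ι] [DecidableEq ι]
    [NormedAddCommGroup E] [InnerProductSpace ℝ E] {a : ι → E} {lam : ℝ} (hlam : 0 ≤ lam)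
    {C : Finset ι} {z : ι → ι → E} {b : E}
    (hz : ∀ i ∈ C, a i - b = lam • ∑ j ∈ C.erase i, z i j)
    (hnorm : ∀ i ∈ C, ∀ j ∈ C, i ≠ j → ‖z i j‖ ≤ 1)
    (hanti : ∀ i ∈ C, ∀ j ∈ C, i ≠ j → z i j = -z j i)
    {x : ι → E} (hx : ∀ y, sumOfNormsObjective a lam x ≤ sumOfNormsObjective a lam y) :
    ∃ xhat : E, ∀ i ∈ C, x i = xhat := by
  set m := (#C : ℝ)⁻¹ • ∑ l ∈ C, x l
  have hdrop := sumOfNormsObjective_piecewise_add_le hlam hz hnorm hanti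
    (sum_sub_mean_eq_zero (k := ℝ) C x)
  have hspread : ∑ i ∈ C, ‖x i - m‖ ^ 2 = 0 :=
    le_antisymm (by linarith [hx (C.piecewise (fun _ ↦ m) x)]) (sum_nonneg fun _ _ ↦ sq_nonneg _)
  refine ⟨m, fun i hi ↦ ?_⟩
  have hi0 := (sum_eq_zero_iff_of_nonneg fun _ _ ↦ sq_nonneg _).mp hspread i hi
  exact sub_eq_zero.mp (norm_eq_zero.mp (sq_eq_zero_iff.mp hi0))

/-- Cluster characterization, sufficient condition (Chiquet et al.): if the multiplier
system is solvable for `C`, then all points of `C` lie in the same cluster of the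
minimizer. -/
theorem cluster_characterization_sufficient
    (d n : ℕ) (a : Fin n → EuclideanSpace ℝ (Fin d)) (lam : ℝ) (hlam : 0 < lam)
    (C : Finset (Fin n)) (hC : C.Nonempty)
    (z : Fin n → Fin n → EuclideanSpace ℝ (Fin d))
    (hz1 : ∀ i ∈ C, a i - (C.card : ℝ)⁻¹ • ∑ l ∈ C, a l = lam • ∑ j ∈ C.erase i, z i j)
    (hz2 : ∀ i ∈ C, ∀ j ∈ C, i ≠ j → ‖z i j‖ ≤ 1)
    (hz3 : ∀ i ∈ C, ∀ j ∈ C, i ≠ j → z i j = -z j i)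
    (x : Fin n → EuclideanSpace ℝ (Fin d))
    (hx : ∀ y : Fin n → EuclideanSpace ℝ (Fin d), sonObjective a lam x ≤ sonObjective a lam y) :
    ∃ xhat : EuclideanSpace ℝ (Fin d), ∀ i ∈ C, x i = xhat :=
  cluster_characterization_sufficient_general hlam.le hz1 hz2 hz3 fun y ↦ by
    simpa only [sonObjective_eq_sumOfNormsObjective] using hx y
end

section
/- Let x* = (x_1*,…,x_n*) be the minimizer of the sum-of-norms clustering objective with points a_1,…,a_n ∈ ℝ^d and parameter λ ≥ 0. Then ‖x_i* − a_i‖ ≤ λ·(n − 1) for every i = 1,…,n. -/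
open Finset

/-!
Moving only the `i`-th point changes the penalty by at most the total weight `L` of the pairs
containing `i` times the length of the move. If `L < ‖x i - a i‖`, moving `x i` towards `a i` until
it is at distance `L` therefore costs at most `L * (‖x i - a i‖ - L)` in the penalty, while the
quadratic term gains `(‖x i - a i‖ ^ 2 - L ^ 2) / 2`, which is larger by
`(‖x i - a i‖ - L) ^ 2 / 2`.
-/

section Proximal

variable {E : Type*} [SeminormedAddCommGroup E] [NormedSpace ℝ E]

theorem exists_norm_sub_eq_and_norm_sub_eq {a u : E} {r : ℝ} (hr : 0 ≤ r) (hru : r < ‖u - a‖) :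
    ∃ v : E, ‖v - a‖ = r ∧ ‖v - u‖ = ‖u - a‖ - r := by
  have hpos : 0 < ‖u - a‖ := hr.trans_lt hru
  refine ⟨AffineMap.lineMap a u (r / ‖u - a‖), ?_, ?_⟩
  · rw [← dist_eq_norm, dist_lineMap_left, dist_eq_norm', Real.norm_of_nonneg (by positivity),
      div_mul_cancel₀ _ hpos.ne']
  · have hratio : 0 ≤ 1 - r / ‖u - a‖ := sub_nonneg.2 ((div_le_one hpos).2 hru.le)
    rw [← dist_eq_norm, dist_lineMap_right, dist_eq_norm', Real.norm_of_nonneg hratio, sub_mul,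
      one_mul, div_mul_cancel₀ _ hpos.ne']

theorem norm_sub_le_of_forall_half_sq_le {a u : E} {L : ℝ} (hL : 0 ≤ L)
    (h : ∀ v, (1 / 2) * ‖u - a‖ ^ 2 ≤ (1 / 2) * ‖v - a‖ ^ 2 + L * ‖v - u‖) :
    ‖u - a‖ ≤ L := by
  by_contra! hlt
  obtain ⟨v, hva, hvu⟩ := exists_norm_sub_eq_and_norm_sub_eq hL hlt
  have hv := h v
  rw [hva, hvu] at hv
  have hgap : 0 < (‖u - a‖ - L) ^ 2 := pow_pos (sub_pos.2 hlt) 2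
  linarith

end Proximal

section WeightedClustering

variable {ι E : Type*} [Fintype ι] [SeminormedAddCommGroup E]

/-- The fusion penalty of weighted sum-of-norms clustering. The sum runs over ordered pairs, so an
unordered pair `{i, j}` carries the weight `w i j + w j i`. -/
def fusionPenalty (w : ι → ι → ℝ) (x : ι → E) : ℝ :=
  ∑ i, ∑ j, w i j * ‖x i - x j‖

/-- The objective of weighted sum-of-norms clustering of the points `a`, with weights on ordered
pairs as in `fusionPenalty`. -/
noncomputable def weightedSonObjective (w : ι → ι → ℝ) (a x : ι → E) : ℝ :=
  (1 / 2) * ∑ i, ‖x i - a i‖ ^ 2 + fusionPenalty w x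

/-- The total weight of the pairs containing `i` in `fusionPenalty`. -/
def weightedDegree (w : ι → ι → ℝ) (i : ι) : ℝ :=
  ∑ j, (w i j + w j i)

theorem norm_sub_le_norm_sub_add_displacements (p q p' q' : E) :
    ‖p' - q'‖ ≤ ‖p - q‖ + (‖p' - p‖ + ‖q' - q‖) := by
  have htriangle := dist_triangle4 p' p q q'
  rw [dist_comm q q'] at htriangle
  simp only [dist_eq_norm] at htriangle
  linarith

theorem fusionPenalty_le_add_sum_weightedDegree_mul {w : ι → ι → ℝ} (hw : ∀ i j, 0 ≤ w i j)
    (x y : ι → E) :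
    fusionPenalty w y ≤ fusionPenalty w x + ∑ i, weightedDegree w i * ‖y i - x i‖ := by
  calc fusionPenalty w y
      ≤ ∑ i, ∑ j, w i j * (‖x i - x j‖ + (‖y i - x i‖ + ‖y j - x j‖)) :=
        sum_le_sum fun i _ ↦ sum_le_sum fun j _ ↦ mul_le_mul_of_nonneg_left
          (norm_sub_le_norm_sub_add_displacements _ _ _ _) (hw i j)
    _ = fusionPenalty w x +
          (∑ i, ∑ j, w i j * ‖y i - x i‖ + ∑ i, ∑ j, w i j * ‖y j - x j‖) := by
        simp only [fusionPenalty, mul_add, sum_add_distrib]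
    _ = fusionPenalty w x + ∑ i, weightedDegree w i * ‖y i - x i‖ := by
        rw [sum_comm (f := fun i j ↦ w i j * ‖y j - x j‖)]
        simp only [weightedDegree, sum_mul, add_mul, sum_add_distrib]

variable [DecidableEq ι]

theorem fusionPenalty_update_le {w : ι → ι → ℝ} (hw : ∀ i j, 0 ≤ w i j) (x : ι → E) (i : ι)
    (v : E) :
    fusionPenalty w (Function.update x i v) ≤
      fusionPenalty w x + weightedDegree w i * ‖v - x i‖ := by
  have hbound := fusionPenalty_le_add_sum_weightedDegree_mul hw x (Function.update x i v)
  rwa [Fintype.sum_eq_single i fun k hk ↦ by simp [hk], Function.update_self] at hbound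

theorem sum_norm_update_sub_sq (a x : ι → E) (i : ι) (v : E) :
    ∑ k, ‖Function.update x i v k - a k‖ ^ 2 =
      ∑ k, ‖x k - a k‖ ^ 2 - ‖x i - a i‖ ^ 2 + ‖v - a i‖ ^ 2 := by
  rw [Fintype.sum_eq_add_sum_compl i, Fintype.sum_eq_add_sum_compl i fun k ↦ ‖x k - a k‖ ^ 2,
    Function.update_self, sum_congr rfl fun k hk ↦ by
      rw [Function.update_of_ne (by simpa using hk)]]
  ring

theorem minimizer_displacement_bound_general [NormedSpace ℝ E] {w : ι → ι → ℝ}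
    (hw : ∀ i j, 0 ≤ w i j) {a x : ι → E} {i : ι}
    (hx : ∀ v, weightedSonObjective w a x ≤ weightedSonObjective w a (Function.update x i v)) :
    ‖x i - a i‖ ≤ weightedDegree w i := by
  have hdegree : 0 ≤ weightedDegree w i := sum_nonneg fun j _ ↦ add_nonneg (hw i j) (hw j i)
  refine norm_sub_le_of_forall_half_sq_le hdegree fun v ↦ ?_
  have hmin := hx v
  rw [weightedSonObjective, weightedSonObjective, sum_norm_update_sub_sq] at hmin
  linarith [fusionPenalty_update_le hw x i v]

end WeightedClustering

section UniformWeight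

variable {ι : Type*} [LinearOrder ι]

/-- The weights on ordered pairs that give each unordered pair of distinct indices the weight `c`,
carried by its increasing ordering. -/
def uniformWeight (c : ℝ) (i j : ι) : ℝ :=
  if i < j then c else 0

theorem uniformWeight_nonneg {c : ℝ} (hc : 0 ≤ c) (i j : ι) : 0 ≤ uniformWeight c i j :=
  ite_nonneg hc le_rfl

theorem uniformWeight_add_swap (c : ℝ) {i j : ι} (hij : i ≠ j) :
    uniformWeight c i j + uniformWeight c j i = c := by
  rcases hij.lt_or_gt with hlt | hgt
  · simp [uniformWeight, hlt, hlt.not_gt]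
  · simp [uniformWeight, hgt, hgt.not_gt]

theorem weightedDegree_uniformWeight [Fintype ι] (c : ℝ) (i : ι) :
    weightedDegree (uniformWeight c) i = c * ((Fintype.card ι : ℝ) - 1) := by
  have hcard : 1 ≤ Fintype.card ι := Fintype.card_pos_iff.2 ⟨i⟩
  have hself : uniformWeight c i i = 0 := if_neg (lt_irrefl i)
  rw [weightedDegree, Fintype.sum_eq_add_sum_compl i, hself, add_zero, zero_add,
    sum_congr rfl fun j hj ↦ uniformWeight_add_swap c (by simpa [eq_comm] using hj), sum_const,
    card_compl, card_singleton, nsmul_eq_mul, Nat.cast_sub hcard, Nat.cast_one, mul_comm]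

end UniformWeight

theorem sonObjective_eq_weightedSonObjective {d n : ℕ} (a : Fin n → EuclideanSpace ℝ (Fin d))
    (lam : ℝ) (x : Fin n → EuclideanSpace ℝ (Fin d)) :
    sonObjective a lam x = weightedSonObjective (uniformWeight lam) a x := by
  simp only [sonObjective, weightedSonObjective, fusionPenalty, uniformWeight, mul_sum, mul_ite,
    ite_mul, mul_zero, zero_mul]

/-- The minimizer of the sum-of-norms objective moves each point at most `λ·(n−1)`. -/
theorem minimizer_displacement_bound
    (d n : ℕ) (a : Fin n → EuclideanSpace ℝ (Fin d)) (lam : ℝ) (hlam : 0 ≤ lam)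
    (x : Fin n → EuclideanSpace ℝ (Fin d))
    (hx : ∀ y : Fin n → EuclideanSpace ℝ (Fin d), sonObjective a lam x ≤ sonObjective a lam y)
    (i : Fin n) :
    ‖x i - a i‖ ≤ lam * ((n : ℝ) - 1) := by
  simp only [sonObjective_eq_weightedSonObjective] at hx
  simpa only [weightedDegree_uniformWeight, Fintype.card_fin] using
    minimizer_displacement_bound_general (uniformWeight_nonneg hlam) fun v ↦
      hx (Function.update x i v)
end
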